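/- Let Z and Y be real Banach spaces with dim Y = 1, let L : Z → Y be a continuous linear map, and let C ⊆ Z be a convex subset. Then the restriction L|_C : C → L(C) (with the subspace topologies on C and on L(C)) is an open map. -/

import Mathlib

/-!
Near each of its points `a`, a set `S` of reals is covered by at most two segments `[a, b]` with
`b ∈ S`. Applied to `S = f(C)` for an affine functional `f` and a convex set `C`, such a segment is
`[f x, f w]` with `x, w ∈ C`, and it lifts to the segment `[x, w] ⊆ C` along an affine section of
`f`. Continuity of this section shows that `f` maps neighbourhoods of `x` in `C` onto
neighbourhoods of `f x` in `f(C)`. A target of dimension at most one injects continuously into `ℝ`,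
and openness onto the image can be tested after such an injection.
-/

open Filter Set Topology

section Topology

variable {X Y Z : Type*} [TopologicalSpace X] [TopologicalSpace Y] [TopologicalSpace Z]

theorem isOpenMap_imageFactorization_iff {f : X → Y} {s : Set X} :
    IsOpenMap (s.imageFactorization f) ↔ ∀ x ∈ s, 𝓝[f '' s] (f x) ≤ map f (𝓝[s] x) := by
  rw [isOpenMap_iff_nhds_le, Subtype.forall]
  refine forall₂_congr fun x hx => ?_
  rw [← map_le_map_iff Subtype.val_injective, map_nhds_subtype_val, map_map,
    ← map_nhds_subtype_val ⟨x, hx⟩, map_map]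
  rfl

theorem isOpenMap_imageFactorization_of_comp {f : X → Y} {g : Y → Z} {s : Set X}
    (hg : Continuous g) (hg_inj : Function.Injective g)
    (h : IsOpenMap (s.imageFactorization (g ∘ f))) : IsOpenMap (s.imageFactorization f) := by
  rw [isOpenMap_imageFactorization_iff] at h ⊢
  intro x hx
  rw [← map_le_map_iff hg_inj, map_map]
  calc map g (𝓝[f '' s] (f x))
      ≤ 𝓝[g '' (f '' s)] (g (f x)) := hg.continuousWithinAt.tendsto_nhdsWithin_image
    _ = 𝓝[(g ∘ f) '' s] ((g ∘ f) x) := by rw [image_comp, Function.comp_apply]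
    _ ≤ map (g ∘ f) (𝓝[s] x) := h x hx

end Topology

theorem nhdsWithin_le_of_forall_uIcc {α : Type*} [LinearOrder α] [TopologicalSpace α]
    [OrderClosedTopology α] {S : Set α} {a : α} {F : Filter α} (ha : a ∈ S)
    (h : ∀ b ∈ S, 𝓝[uIcc a b] a ≤ F) : 𝓝[S] a ≤ F := by
  have pure_le : 𝓝[{a}] a ≤ F := by simpa using h a ha
  have right : 𝓝[S ∩ Ici a] a ≤ F := by
    by_cases hS : ∃ b ∈ S, a < b
    · obtain ⟨b, hb, hab⟩ := hS
      calc 𝓝[S ∩ Ici a] a ≤ 𝓝[≥] a := nhdsWithin_mono a inter_subset_right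
        _ = 𝓝[uIcc a b] a := by rw [uIcc_of_le hab.le, nhdsWithin_Icc_eq_nhdsGE hab]
        _ ≤ F := h b hb
    · push Not at hS
      exact (nhdsWithin_mono a fun b hb => (hS b hb.1).antisymm hb.2).trans pure_le
  have left : 𝓝[S ∩ Iic a] a ≤ F := by
    by_cases hS : ∃ b ∈ S, b < a
    · obtain ⟨b, hb, hba⟩ := hS
      calc 𝓝[S ∩ Iic a] a ≤ 𝓝[≤] a := nhdsWithin_mono a inter_subset_right
        _ = 𝓝[uIcc a b] a := by rw [uIcc_of_ge hba.le, nhdsWithin_Icc_eq_nhdsLE hba]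
        _ ≤ F := h b hb
    · push Not at hS
      exact (nhdsWithin_mono a fun b hb => hb.2.antisymm (hS b hb.1)).trans pure_le
  rw [← inter_univ S, ← Iic_union_Ici (a := a), inter_union_distrib_left, nhdsWithin_union]
  exact sup_le left right

section AffineFunctional

variable {𝕜 E : Type*} [Field 𝕜] [LinearOrder 𝕜] [IsStrictOrderedRing 𝕜]
  [TopologicalSpace 𝕜] [IsTopologicalRing 𝕜]
  [AddCommGroup E] [Module 𝕜 E] [TopologicalSpace E] [IsTopologicalAddGroup E]
  [ContinuousSMul 𝕜 E]

theorem nhdsWithin_segment_le_map (f : E →ᵃ[𝕜] 𝕜) (x w : E) :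
    𝓝[segment 𝕜 (f x) (f w)] (f x) ≤ map f (𝓝[segment 𝕜 x w] x) := by
  by_cases hxw : f x = f w
  · rw [← hxw, segment_same, nhdsWithin_singleton, ← map_pure]
    exact map_mono (pure_le_nhdsWithin (left_mem_segment 𝕜 x w))
  have hne : f w - f x ≠ 0 := sub_ne_zero.2 (Ne.symm hxw)
  let σ : 𝕜 → E := fun r => AffineMap.lineMap x w ((r - f x) / (f w - f x))
  have σ_lineMap (t : 𝕜) : σ (AffineMap.lineMap (f x) (f w) t) = AffineMap.lineMap x w t := by
    simp [σ, AffineMap.lineMap_apply, hne]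
  have f_σ : Function.RightInverse σ f := fun r =>
    (f.apply_lineMap x w _).trans (by simp [AffineMap.lineMap_apply, hne])
  have σ_maps : MapsTo σ (segment 𝕜 (f x) (f w)) (segment 𝕜 x w) := by
    simp only [segment_eq_image_lineMap]
    rintro _ ⟨t, ht, rfl⟩
    exact ⟨t, ht, (σ_lineMap t).symm⟩
  have σ_cont : Continuous σ := AffineMap.lineMap_continuous.comp (by fun_prop)
  have σ_tendsto : Tendsto σ (𝓝[segment 𝕜 (f x) (f w)] (f x)) (𝓝[segment 𝕜 x w] x) := by
    have := σ_cont.continuousWithinAt.tendsto_nhdsWithin σ_maps (x := f x)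
    rwa [show σ (f x) = x by simp [σ]] at this
  calc 𝓝[segment 𝕜 (f x) (f w)] (f x)
      = map f (map σ (𝓝[segment 𝕜 (f x) (f w)] (f x))) := by rw [map_map, f_σ.comp_eq_id, map_id]
    _ ≤ map f (𝓝[segment 𝕜 x w] x) := map_mono σ_tendsto

theorem isOpenMap_imageFactorization_of_convex [OrderClosedTopology 𝕜]
    {C : Set E} (hC : Convex 𝕜 C) (f : E →ᵃ[𝕜] 𝕜) : IsOpenMap (C.imageFactorization f) := by
  refine isOpenMap_imageFactorization_iff.2 fun x hx =>
    nhdsWithin_le_of_forall_uIcc (mem_image_of_mem f hx) ?_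
  rintro _ ⟨w, hw, rfl⟩
  rw [← segment_eq_uIcc]
  exact (nhdsWithin_segment_le_map f x w).trans
    (map_mono (nhdsWithin_mono x (hC.segment_subset hx hw)))

end AffineFunctional

theorem restriction_isOpenMap_of_rank_one_general
    {Z Y : Type*} [AddCommGroup Z] [Module ℝ Z] [TopologicalSpace Z]
    [IsTopologicalAddGroup Z] [ContinuousSMul ℝ Z]
    [AddCommGroup Y] [Module ℝ Y] [TopologicalSpace Y]
    [IsTopologicalAddGroup Y] [ContinuousSMul ℝ Y] [T2Space Y]
    (hY : Module.rank ℝ Y ≤ 1) (L : Z →ᵃ[ℝ] Y) {C : Set Z} (hC : Convex ℝ C) :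
    IsOpenMap (C.imageFactorization L) := by
  have : FiniteDimensional ℝ Y :=
    Module.rank_lt_aleph0_iff.1 (hY.trans_lt Cardinal.one_lt_aleph0)
  obtain ⟨φ, φ_injective⟩ : ∃ φ : Y →ₗ[ℝ] ℝ, Function.Injective φ :=
    lift_rank_le_iff_exists_linearMap.1 (by simpa using hY)
  exact isOpenMap_imageFactorization_of_comp φ.continuous_of_finiteDimensional φ_injective
    (isOpenMap_imageFactorization_of_convex hC (φ.toAffineMap.comp L))

/-- Auxiliary claim in the proof of Theorem 2.1, (c) ⇒ (a): if `Y` is a one-dimensional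
Banach space, then for every continuous linear map `L : Z → Y` and every convex subset
`C ⊆ Z`, the restriction `L|_C : C → L(C)` (with subspace topologies) is an open map. -/
theorem restriction_isOpenMap_of_rank_one
    {Z Y : Type*} [NormedAddCommGroup Z] [NormedSpace ℝ Z] [CompleteSpace Z]
    [NormedAddCommGroup Y] [NormedSpace ℝ Y] [CompleteSpace Y]
    (hY : Module.rank ℝ Y = 1)
    (L : Z →L[ℝ] Y) (C : Set Z) (hC : Convex ℝ C) :
    IsOpenMap (fun x : ↥C => (⟨L (x : Z), ⟨(x : Z), x.2, rfl⟩⟩ : ↥(⇑L '' C))) :=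
  restriction_isOpenMap_of_rank_one_general hY.le L.toLinearMap.toAffineMap hC
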